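/- ∫₀^{∞} (t/(1+t²)²) · (∫₀^{π/2} (1 + t² sin²θ)^{-1/2} dθ) dt = π²/16. -/

import Mathlib

open Real

/-!
Read `(t, θ)` as polar coordinates of a point `(x, y)` of the open first quadrant. The factor `t`
is the Jacobian, and the double integral becomes that of `(1 + y²)^(-1/2) / (1 + x² + y²)²`.
Integrating in `x` first, `∫₀^∞ dx / (a² + x²)² = π / (4a³)` with `a² = 1 + y²` leaves
`π / 4 * ∫₀^∞ dy / (1 + y²)²`, to which the same formula applies with `a = 1`.
-/

open MeasureTheory Set Filter Topology

section PolarCoordinates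

variable {E : Type*} [NormedAddCommGroup E] [NormedSpace ℝ E] {s : Set (ℝ × ℝ)}

theorem setIntegral_polarCoord_symm_image (hs : MeasurableSet s) (hs' : s ⊆ polarCoord.target)
    (f : ℝ × ℝ → E) :
    ∫ p in polarCoord.symm '' s, f p = ∫ p in s, p.1 • f (polarCoord.symm p) := by
  rw [integral_image_eq_integral_abs_det_fderiv_smul volume hs
    (fun p _ ↦ (hasFDerivAt_polarCoord_symm p).hasFDerivWithinAt)
    (polarCoord.symm.injOn.mono hs')]
  refine setIntegral_congr_fun hs fun p hp ↦ ?_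
  have hr : 0 < p.1 := (hs' hp).1
  simp only [det_fderivPolarCoordSymm, abs_of_pos hr]

theorem integrableOn_polarCoord_symm_image_iff (hs : MeasurableSet s)
    (hs' : s ⊆ polarCoord.target) (f : ℝ × ℝ → E) :
    IntegrableOn f (polarCoord.symm '' s) ↔
      IntegrableOn (fun p ↦ p.1 • f (polarCoord.symm p)) s := by
  rw [integrableOn_image_iff_integrableOn_abs_det_fderiv_smul volume hs
    (fun p _ ↦ (hasFDerivAt_polarCoord_symm p).hasFDerivWithinAt)
    (polarCoord.symm.injOn.mono hs')]
  refine integrableOn_congr_fun (fun p hp ↦ ?_) hs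
  have hr : 0 < p.1 := (hs' hp).1
  simp only [det_fderivPolarCoordSymm, abs_of_pos hr]

theorem polarCoord_symm_image_quadrant :
    polarCoord.symm '' (Ioi 0 ×ˢ Ioo 0 (π / 2)) = Ioi (0 : ℝ) ×ˢ Ioi (0 : ℝ) := by
  refine Subset.antisymm ?_ ?_
  · rintro _ ⟨⟨r, θ⟩, ⟨hr : 0 < r, hθ⟩, rfl⟩
    exact ⟨mul_pos hr (cos_pos_of_mem_Ioo ⟨by linarith [hθ.1, pi_pos], hθ.2⟩),
      mul_pos hr (sin_pos_of_pos_of_lt_pi hθ.1 (by linarith [hθ.2, pi_pos]))⟩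
  · rintro z ⟨hx : 0 < z.1, hy : 0 < z.2⟩
    have hz : z ∈ polarCoord.source := Or.inl hx
    obtain ⟨hr : 0 < (polarCoord z).1, hθ⟩ := polarCoord.map_source hz
    have hsymm : polarCoord.symm (polarCoord z) = z := polarCoord.left_inv hz
    generalize polarCoord z = p at hr hθ hsymm
    subst hsymm
    have hcos : 0 < cos p.2 := pos_of_mul_pos_right hx hr.le
    have hsin : 0 < sin p.2 := pos_of_mul_pos_right hy hr.le
    refine ⟨p, ⟨hr, ?_, ?_⟩, rfl⟩
    · exact not_le.1 fun h ↦ hsin.not_ge (sin_nonpos_of_nonpos_of_neg_pi_le h hθ.1.le)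
    · exact not_le.1 fun h ↦
        hcos.not_ge (cos_nonpos_of_pi_div_two_le_of_le h (by linarith [hθ.2, pi_pos]))

theorem integral_integral_polarCoord_quadrant {f : ℝ × ℝ → E}
    (hf : IntegrableOn f (Ioi 0 ×ˢ Ioi 0)) :
    ∫ r in Ioi (0 : ℝ), r • ∫ θ in (0 : ℝ)..(π / 2), f (r * cos θ, r * sin θ) =
      ∫ y in Ioi (0 : ℝ), ∫ x in Ioi (0 : ℝ), f (x, y) := by
  have hmeas : MeasurableSet (Ioi (0 : ℝ) ×ˢ Ioo 0 (π / 2)) :=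
    measurableSet_Ioi.prod measurableSet_Ioo
  have hsub : Ioi (0 : ℝ) ×ˢ Ioo 0 (π / 2) ⊆ polarCoord.target :=
    prod_mono_right (Ioo_subset_Ioo (by linarith [pi_pos]) (by linarith [pi_pos]))
  have hpolar : IntegrableOn (fun p : ℝ × ℝ ↦ p.1 • f (polarCoord.symm p))
      (Ioi 0 ×ˢ Ioo 0 (π / 2)) := by
    rwa [← integrableOn_polarCoord_symm_image_iff hmeas hsub, polarCoord_symm_image_quadrant]
  calc
    _ = ∫ r in Ioi (0 : ℝ), ∫ θ in Ioo 0 (π / 2), r • f (polarCoord.symm (r, θ)) := by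
      simp only [intervalIntegral.integral_of_le pi_div_two_pos.le, integral_Ioc_eq_integral_Ioo,
        integral_smul, polarCoord_symm_apply]
    _ = ∫ p in Ioi (0 : ℝ) ×ˢ Ioo 0 (π / 2), p.1 • f (polarCoord.symm p) :=
      (setIntegral_prod _ hpolar).symm
    _ = ∫ p in Ioi (0 : ℝ) ×ˢ Ioi (0 : ℝ), f p := by
      rw [← setIntegral_polarCoord_symm_image hmeas hsub, polarCoord_symm_image_quadrant]
    _ = ∫ p in Ioi (0 : ℝ) ×ˢ Ioi (0 : ℝ), f p.swap := (setIntegral_prod_swap _ _ f).symm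
    _ = ∫ y in Ioi (0 : ℝ), ∫ x in Ioi (0 : ℝ), f (x, y) := setIntegral_prod _ hf.swap

end PolarCoordinates

theorem tendsto_div_add_sq_atTop_zero (c : ℝ) :
    Tendsto (fun x : ℝ ↦ x / (c + x ^ 2)) atTop (𝓝 0) := by
  have hdenom : Tendsto (fun x : ℝ ↦ c / x + x) atTop atTop :=
    (tendsto_const_nhds.div_atTop tendsto_id).add_atTop tendsto_id
  refine hdenom.inv_tendsto_atTop.congr' ?_
  filter_upwards [eventually_ne_atTop 0] with x hx
  rw [Pi.inv_apply, div_add' _ _ _ hx, inv_div, sq]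

theorem hasDerivAt_arctan_div_add_div_sq_add_sq {a : ℝ} (ha : a ≠ 0) (x : ℝ) :
    HasDerivAt (fun x ↦ (arctan (x / a) / a + x / (a ^ 2 + x ^ 2)) / (2 * a ^ 2))
      ((a ^ 2 + x ^ 2) ^ 2)⁻¹ x := by
  have hden : a ^ 2 + x ^ 2 ≠ 0 := by positivity
  have harctan := (((hasDerivAt_id' x).div_const a).arctan).div_const a
  have hrat := (hasDerivAt_id' x).div (((hasDerivAt_id' x).pow 2).const_add (a ^ 2)) hden
  refine ((harctan.add hrat).div_const (2 * a ^ 2)).congr_deriv ?_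
  have hscale : 1 + (x / a) ^ 2 = (a ^ 2 + x ^ 2) / a ^ 2 := by field_simp
  rw [hscale]
  simp only [one_div, inv_div, Pi.pow_apply, one_mul, Nat.cast_ofNat, Nat.add_one_sub_one, pow_one,
    mul_one]
  field_simp
  ring

theorem integral_Ioi_inv_sq_add_sq_sq {a : ℝ} (ha : 0 < a) :
    ∫ x in Ioi (0 : ℝ), ((a ^ 2 + x ^ 2) ^ 2)⁻¹ = π / (4 * a ^ 3) := by
  have harctan : Tendsto (fun x ↦ arctan (x / a)) atTop (𝓝 (π / 2)) :=
    (tendsto_nhds_of_tendsto_nhdsWithin tendsto_arctan_atTop).comp (tendsto_id.atTop_div_const ha)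
  have hlim := ((harctan.div_const a).add (tendsto_div_add_sq_atTop_zero (a ^ 2))).div_const
    (2 * a ^ 2)
  rw [integral_Ioi_of_hasDerivAt_of_nonneg'
    (fun x _ ↦ hasDerivAt_arctan_div_add_div_sq_add_sq ha.ne' x)
    (fun x _ ↦ by positivity) hlim]
  simp only [zero_div, arctan_zero, add_zero, sub_zero]
  field_simp
  norm_num

/-- The integrand of `integral_K_over_sq` after the change of variables
`x = t * cos θ`, `y = t * sin θ`, which absorbs the factor `t` as the Jacobian. -/
noncomputable def quadrantIntegrand (p : ℝ × ℝ) : ℝ :=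
  (1 + p.2 ^ 2) ^ (-(1 / 2) : ℝ) * ((1 + p.1 ^ 2 + p.2 ^ 2) ^ 2)⁻¹

theorem quadrantIntegrand_mul_cos_mul_sin (t θ : ℝ) :
    quadrantIntegrand (t * cos θ, t * sin θ) =
      ((1 + t ^ 2) ^ 2)⁻¹ * (1 + t ^ 2 * sin θ ^ 2) ^ (-(1 / 2) : ℝ) := by
  have hnorm : 1 + (t * cos θ) ^ 2 + (t * sin θ) ^ 2 = 1 + t ^ 2 := by
    linear_combination t ^ 2 * cos_sq_add_sin_sq θ
  rw [quadrantIntegrand, hnorm, mul_pow t (sin θ), mul_comm]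

theorem quadrantIntegrand_nonneg (p : ℝ × ℝ) : 0 ≤ quadrantIntegrand p := by
  unfold quadrantIntegrand
  positivity

theorem quadrantIntegrand_le (p : ℝ × ℝ) :
    quadrantIntegrand p ≤ (1 + p.1 ^ 2)⁻¹ * (1 + p.2 ^ 2)⁻¹ := by
  obtain ⟨x, y⟩ := p
  have hrpow : (1 + y ^ 2) ^ (-(1 / 2) : ℝ) ≤ 1 :=
    rpow_le_one_of_one_le_of_nonpos (by linarith [sq_nonneg y]) (by norm_num)
  have hprod : (1 + x ^ 2) * (1 + y ^ 2) ≤ (1 + x ^ 2 + y ^ 2) ^ 2 := by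
    nlinarith [sq_nonneg x, sq_nonneg y, mul_nonneg (sq_nonneg x) (sq_nonneg y)]
  calc
    _ ≤ 1 * ((1 + x ^ 2) * (1 + y ^ 2))⁻¹ := by unfold quadrantIntegrand; gcongr
    _ = (1 + x ^ 2)⁻¹ * (1 + y ^ 2)⁻¹ := by rw [one_mul, mul_inv]

theorem integrable_quadrantIntegrand : Integrable quadrantIntegrand := by
  refine (integrable_inv_one_add_sq.mul_prod integrable_inv_one_add_sq).mono' ?_ (.of_forall ?_)
  · unfold quadrantIntegrand
    exact Measurable.aestronglyMeasurable (by fun_prop)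
  · intro p
    rw [norm_of_nonneg (quadrantIntegrand_nonneg p)]
    exact quadrantIntegrand_le p

theorem integral_Ioi_quadrantIntegrand (y : ℝ) :
    ∫ x in Ioi (0 : ℝ), quadrantIntegrand (x, y) = π / 4 * ((1 + y ^ 2) ^ 2)⁻¹ := by
  have hpos : 0 < √(1 + y ^ 2) := sqrt_pos.2 (by positivity)
  have hsq : √(1 + y ^ 2) ^ 2 = 1 + y ^ 2 := sq_sqrt (by positivity)
  calc
    _ = (√(1 + y ^ 2))⁻¹ * ∫ x in Ioi (0 : ℝ), ((√(1 + y ^ 2) ^ 2 + x ^ 2) ^ 2)⁻¹ := by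
      rw [← integral_const_mul, sqrt_eq_rpow, ← rpow_neg (by positivity), ← sqrt_eq_rpow, hsq]
      simp only [quadrantIntegrand, add_right_comm]
    _ = (√(1 + y ^ 2))⁻¹ * (π / (4 * √(1 + y ^ 2) ^ 3)) := by
      rw [integral_Ioi_inv_sq_add_sq_sq hpos]
    _ = π / 4 * ((√(1 + y ^ 2) ^ 2) ^ 2)⁻¹ := by field_simp
    _ = π / 4 * ((1 + y ^ 2) ^ 2)⁻¹ := by rw [hsq]

/-- `∫₀^∞ t/(1+t²)² · K(it) dt = π²/16`, where
`K(it) = ∫₀^{π/2} (1 + t² sin²θ)^{-1/2} dθ` is the complete elliptic integral of the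
first kind with imaginary modulus. -/
theorem integral_K_over_sq :
    ∫ t in Set.Ioi (0:ℝ),
        t / (1 + t ^ 2) ^ 2 *
          ∫ θ in (0:ℝ)..(π/2), (1 + t ^ 2 * Real.sin θ ^ 2) ^ (-(1/2) : ℝ)
      = π ^ 2 / 16 := by
  calc
    _ = ∫ t in Ioi (0 : ℝ),
          t • ∫ θ in (0 : ℝ)..(π / 2), quadrantIntegrand (t * cos θ, t * sin θ) := by
      simp only [quadrantIntegrand_mul_cos_mul_sin, intervalIntegral.integral_const_mul,
        smul_eq_mul, div_eq_mul_inv, mul_assoc]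
    _ = ∫ y in Ioi (0 : ℝ), ∫ x in Ioi (0 : ℝ), quadrantIntegrand (x, y) :=
      integral_integral_polarCoord_quadrant integrable_quadrantIntegrand.integrableOn
    _ = π / 4 * ∫ y in Ioi (0 : ℝ), ((1 ^ 2 + y ^ 2) ^ 2)⁻¹ := by
      simp only [integral_Ioi_quadrantIntegrand, integral_const_mul, one_pow]
    _ = π / 4 * (π / (4 * 1 ^ 3)) := by rw [integral_Ioi_inv_sq_add_sq_sq one_pos]
    _ = π ^ 2 / 16 := by ring
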